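/- For every A ≥ 1 there exist a constant C > 0 and an exponent θ ∈ (0,1) such that for all a ∈ [1,A] and all k ≥ 1, the k-th Dirichlet biharmonic eigenvalue of the rectangle R_a satisfies λ_k(a)^{1/2} ≥ 4πk + 2(a + 1/a)·λ_k(a)^{1/4} − C·λ_k(a)^{θ/4} − 3π. -/

import Mathlib

open MeasureTheory Real Filter

noncomputable section

/-- Directional (partial) derivative of `u : ℝ × ℝ → ℝ` in direction `v`. -/
def pd (v : ℝ × ℝ) (u : ℝ × ℝ → ℝ) : ℝ × ℝ → ℝ := fun p => fderiv ℝ u p v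

/-- Second partial derivative `∂²u/∂x²`. -/
def uxx (u : ℝ × ℝ → ℝ) : ℝ × ℝ → ℝ := pd (1, 0) (pd (1, 0) u)

/-- Second partial derivative `∂²u/∂y²`. -/
def uyy (u : ℝ × ℝ → ℝ) : ℝ × ℝ → ℝ := pd (0, 1) (pd (0, 1) u)

/-- Mixed second partial derivative `∂²u/∂x∂y`. -/
def uxy (u : ℝ × ℝ → ℝ) : ℝ × ℝ → ℝ := pd (0, 1) (pd (1, 0) u)

/-- The Laplacian `Δu = u_xx + u_yy`. -/
def lap (u : ℝ × ℝ → ℝ) : ℝ × ℝ → ℝ := fun p => uxx u p + uyy u p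

/-- The open rectangle `R_a = (0,a) × (0,1/a)` of unit area. -/
def Rect (a : ℝ) : Set (ℝ × ℝ) := Set.Ioo 0 a ×ˢ Set.Ioo 0 (1 / a)

/-- Admissible test functions: smooth, compactly supported inside `Ω`. -/
def Adm (Ω : Set (ℝ × ℝ)) (u : ℝ × ℝ → ℝ) : Prop :=
  ContDiff ℝ (⊤ : ℕ∞) u ∧ HasCompactSupport u ∧ tsupport u ⊆ Ω

/-- First Dirichlet eigenvalue of the biharmonic operator on `R_a`,
characterized variationally as the infimum of the Rayleigh quotient. -/
def lam1 (a : ℝ) : ℝ :=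
  sInf { μ | ∃ u : ℝ × ℝ → ℝ, Adm (Rect a) u ∧ u ≠ 0 ∧
    μ = (∫ p, (lap u p) ^ 2) / (∫ p, (u p) ^ 2) }

/-- `k`-th Dirichlet eigenvalue of the biharmonic operator on `R_a`:
infimum over linearly independent `k`-tuples of admissible functions of the
maximum of the Rayleigh quotient over nonzero linear combinations. -/
def lamk (k : ℕ) (a : ℝ) : ℝ :=
  sInf { μ | ∃ u : Fin k → (ℝ × ℝ → ℝ), (∀ i, Adm (Rect a) (u i)) ∧
    LinearIndependent ℝ u ∧
    μ = sSup { r | ∃ c : Fin k → ℝ, c ≠ 0 ∧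
      r = (∫ p, (lap (fun q => ∑ i, c i * u i q) p) ^ 2) /
          (∫ p, (∑ i, c i * u i p) ^ 2) } }

lemma sum_emod_eq {p : ℤ} {q : ℕ} (hq : 0 < q) (hpq : IsCoprime p q) (m : ℤ) :
    ∑ h ∈ Finset.range q, ((m + h * p) % q : ℤ) = ∑ j ∈ Finset.range q, (j : ℤ) := by
  have hq' : (0 : ℤ) < q := by exact_mod_cast hq
  have hcast : ∀ h : ℕ, (((m + h * p) % q).toNat : ℤ) = (m + h * p) % q := fun h =>
    Int.toNat_of_nonneg (Int.emod_nonneg _ hq'.ne')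
  have hinj : Set.InjOn (fun h : ℕ => ((m + h * p) % q).toNat) (Finset.range q) := by
    intro h hh h' hh' heq
    simp only [Finset.coe_range, Set.mem_Iio] at hh hh'
    have h1 : (m + h * p) % q = (m + h' * p) % q := by
      rw [← hcast h, ← hcast h']; exact_mod_cast heq
    have h2 : (q : ℤ) ∣ (h' - h) * p := by
      have := Int.ModEq.dvd h1
      convert this using 1; ring
    have h3 : (q : ℤ) ∣ (h' - h : ℤ) := (hpq.symm).dvd_of_dvd_mul_right h2
    have h4 : (h' - h : ℤ) = 0 := Int.eq_zero_of_abs_lt_dvd h3 (by rw [abs_lt]; constructor <;> omega)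
    omega
  have himg : (Finset.range q).image (fun h : ℕ => ((m + h * p) % q).toNat) = Finset.range q := by
    apply Finset.eq_of_subset_of_card_le
    · intro j hj
      obtain ⟨h, -, rfl⟩ := Finset.mem_image.1 hj
      have := Int.emod_lt_of_pos (m + h * p) hq'
      have := hcast h
      rw [Finset.mem_range]; omega
    · rw [Finset.card_image_of_injOn hinj]
  conv_rhs => rw [← himg, Finset.sum_image hinj]
  exact Finset.sum_congr rfl fun h _ => (hcast h).symm

lemma le_sum_fract_arith {p : ℤ} {q : ℕ} (hq : 0 < q) (hpq : IsCoprime p q) (x : ℝ) :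
    ((q : ℝ) - 1) / 2 ≤ ∑ h ∈ Finset.range q, Int.fract (x + h * (p / q : ℝ)) := by
  have hq' : (0 : ℤ) < q := by exact_mod_cast hq
  have hqr : (0 : ℝ) < q := by exact_mod_cast hq
  have key : ∀ h ∈ Finset.range q,
      (((⌊q * x⌋ + h * p) % q : ℤ) : ℝ) / q ≤ Int.fract (x + h * (p / q : ℝ)) := by
    intro h _
    set z := x + h * (p / q : ℝ) with hz
    have hzq : (q : ℝ) * z = q * x + h * p := by rw [hz]; field_simp
    have h1 : (⌊z⌋ : ℝ) ≤ z := Int.floor_le z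
    have h2 : z < ⌊z⌋ + 1 := Int.lt_floor_add_one z
    have h3 : q * ⌊z⌋ - h * p ≤ ⌊q * x⌋ := by
      rw [Int.le_floor]; push_cast; nlinarith
    have h4 : ((⌊q * x⌋ : ℤ) : ℝ) ≤ q * x := Int.floor_le _
    have h5 : ⌊q * x⌋ + h * p - q * ⌊z⌋ < q := by
      have : ((⌊q * x⌋ + h * p - q * ⌊z⌋ : ℤ) : ℝ) < (q : ℤ) := by push_cast; nlinarith
      exact_mod_cast this
    have h6 : (⌊q * x⌋ + h * p) % q = ⌊q * x⌋ + h * p - q * ⌊z⌋ := by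
      have : ⌊q * x⌋ + h * p = (⌊q * x⌋ + h * p - q * ⌊z⌋) + q * ⌊z⌋ := by ring
      rw [this, Int.add_mul_emod_self_left, Int.emod_eq_of_lt (by linarith) h5]; ring
    rw [h6, div_le_iff₀ hqr, Int.fract]; push_cast; nlinarith
  refine le_trans ?_ (Finset.sum_le_sum key)
  rw [← Finset.sum_div, ← Int.cast_sum, sum_emod_eq hq hpq]
  have := Finset.sum_range_id_mul_two q
  have h2 : (((∑ j ∈ Finset.range q, (j : ℤ)) : ℤ) : ℝ) * 2 = q * (q - 1) := by
    have : ((∑ j ∈ Finset.range q, j : ℕ) : ℝ) * 2 = (q : ℝ) * ((q - 1 : ℕ) : ℝ) := by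
      exact_mod_cast this
    rw [Nat.cast_sub hq] at this
    push_cast at this ⊢; linarith
  rw [le_div_iff₀ hqr]; linarith

lemma le_sum_fract_near_arith {p : ℤ} {q : ℕ} (hq : 0 < q) (hpq : IsCoprime p q) (x δ : ℝ)
    (y : ℕ → ℝ) (hy : ∀ h < q, |y h - (x + h * (p / q : ℝ))| ≤ δ) :
    ((q : ℝ) - 1) / 2 - 2 * q * δ ≤ ∑ h ∈ Finset.range q, Int.fract (y h) := by
  have key : ∀ h ∈ Finset.range q,
      Int.fract ((x + δ) + h * (p / q : ℝ)) - 2 * δ ≤ Int.fract (y h) := by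
    intro h hh
    have h1 := abs_le.1 (hy h (Finset.mem_range.1 hh))
    have h2 : ⌊y h⌋ ≤ ⌊(x + δ) + h * (p / q : ℝ)⌋ := Int.floor_le_floor (by linarith)
    have h3 : (⌊y h⌋ : ℝ) ≤ ⌊(x + δ) + h * (p / q : ℝ)⌋ := by exact_mod_cast h2
    rw [Int.fract, Int.fract]; linarith
  refine le_trans ?_ (Finset.sum_le_sum key)
  rw [Finset.sum_sub_distrib]
  have := le_sum_fract_arith hq hpq (x + δ)
  simp only [Finset.sum_const, Finset.card_range, nsmul_eq_mul]
  linarith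

lemma slope_drift_ge {g : ℕ → ℝ} {N : ℕ} {κ : ℝ}
    (hg : ∀ n, n + 2 ≤ N → κ ≤ 2 * g (n + 1) - g n - g (n + 2)) (n h : ℕ) (hn : n + h + 1 ≤ N) :
    h * κ ≤ (g (n + 1) - g n) - (g (n + h + 1) - g (n + h)) := by
  induction h with
  | zero => simp
  | succ h ih =>
    have h1 := ih (by omega)
    have h2 := hg (n + h) (by omega)
    rw [show n + (h + 1) = n + h + 1 by ring]
    push_cast; linarith

lemma slope_drift_le {g : ℕ → ℝ} {N : ℕ} {μ : ℝ}
    (hg : ∀ n, n + 2 ≤ N → 2 * g (n + 1) - g n - g (n + 2) ≤ μ) (n h : ℕ) (hn : n + h + 1 ≤ N) :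
    (g (n + 1) - g n) - (g (n + h + 1) - g (n + h)) ≤ h * μ := by
  have := slope_drift_ge (g := fun i => - g i) (N := N) (κ := -μ)
    (fun n hn => by have := hg n hn; linarith) n h hn
  linarith

lemma abs_sub_tangent_le {g : ℕ → ℝ} {N : ℕ} {κ μ : ℝ} (hκ : 0 ≤ κ)
    (hg : ∀ n, n + 2 ≤ N → κ ≤ 2 * g (n + 1) - g n - g (n + 2))
    (hg' : ∀ n, n + 2 ≤ N → 2 * g (n + 1) - g n - g (n + 2) ≤ μ) (hμ : 0 ≤ μ)
    (n h : ℕ) (hn : n + h ≤ N) :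
    |g (n + h) - (g n + h * (g (n + 1) - g n))| ≤ (h : ℝ) ^ 2 * μ := by
  induction h with
  | zero => simp
  | succ h ih =>
    have h1 := abs_le.1 (ih (by omega))
    have h2 := slope_drift_ge hg n h (by omega)
    have h3 := slope_drift_le hg' n h (by omega)
    have h4 : (0 : ℝ) ≤ h * κ := by positivity
    have h5 : (0 : ℝ) ≤ h * μ := by positivity
    rw [show n + (h + 1) = n + h + 1 by ring, abs_le]
    push_cast
    constructor <;> nlinarith

lemma card_slope_near_le {g : ℕ → ℝ} {N : ℕ} {κ : ℝ} (hκ : 0 < κ)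
    (hg : ∀ n, n + 2 ≤ N → κ ≤ 2 * g (n + 1) - g n - g (n + 2)) (v ε : ℝ) (hε : 0 ≤ ε) :
    (((Finset.range N).filter (fun n => |g (n + 1) - g n - v| ≤ ε)).card : ℝ) ≤ 2 * ε / κ + 1 := by
  set s := (Finset.range N).filter (fun n => |g (n + 1) - g n - v| ≤ ε) with hs
  rcases s.eq_empty_or_nonempty with h | h
  · rw [h]; simp; positivity
  have hi := s.min'_mem h
  have hj := s.max'_mem h
  set i := s.min' h with hi_def
  set j := s.max' h with hj_def
  have hij : i ≤ j := s.min'_le _ hj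
  have hsub : s ⊆ Finset.Icc i j := fun n hn =>
    Finset.mem_Icc.2 ⟨s.min'_le _ hn, s.le_max' _ hn⟩
  have hcard := Finset.card_le_card hsub
  rw [Nat.card_Icc] at hcard
  obtain ⟨d, hd⟩ := Nat.exists_eq_add_of_le hij
  have hi2 := abs_le.1 (Finset.mem_filter.1 hi).2
  have hj2 := abs_le.1 (Finset.mem_filter.1 hj).2
  have hjN := Finset.mem_range.1 (Finset.mem_filter.1 hj).1
  have hdr := slope_drift_ge hg i d (by omega)
  rw [← hd] at hdr
  have h1 : (s.card : ℝ) ≤ d + 1 := by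
    have : s.card ≤ d + 1 := by omega
    exact_mod_cast this
  have h2 : (d : ℝ) ≤ 2 * ε / κ := by
    rw [le_div_iff₀ hκ]; linarith
  linarith

open Classical in
lemma sum_fract_ge_aux {g : ℕ → ℝ} {N : ℕ} {κ μ : ℝ} (hκ : 0 ≤ κ) (hμ : 0 ≤ μ)
    (hg : ∀ n, n + 2 ≤ N → κ ≤ 2 * g (n + 1) - g n - g (n + 2))
    (hg' : ∀ n, n + 2 ≤ N → 2 * g (n + 1) - g n - g (n + 2) ≤ μ)
    {Q K : ℕ} (hQ : 0 < Q) (hK : 0 < K) (d : ℕ) : ∀ n, n + d = N →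
    (d : ℝ) / 2 - (5 / 2 + 2 * μ * (Q : ℝ) ^ 3) * (d / K)
      - ((Finset.Ico n N).filter
          (fun i => ∃ r : ℚ, r.den ≤ K ∧ |g (i + 1) - g i - r| ≤ 1 / Q)).card - Q
      ≤ ∑ i ∈ Finset.Ico n N, Int.fract (g i) := by
  set D := 5 / 2 + 2 * μ * (Q : ℝ) ^ 3 with hD
  have hD0 : 0 ≤ D := by positivity
  have hKr : (0 : ℝ) < K := by exact_mod_cast hK
  have hQr : (0 : ℝ) < Q := by exact_mod_cast hQ
  induction d using Nat.strong_induction_on with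
  | _ d ih =>
  intro n hn
  have hsum0 : 0 ≤ ∑ i ∈ Finset.Ico n N, Int.fract (g i) :=
    Finset.sum_nonneg fun i _ => Int.fract_nonneg _
  have hDd : 0 ≤ D * (d / K) := by positivity
  rcases le_or_gt d Q with hdQ | hdQ
  · have h1 : (d : ℝ) ≤ Q := by exact_mod_cast hdQ
    have h2 : (0 : ℝ) ≤ ((Finset.Ico n N).filter
          (fun i => ∃ r : ℚ, r.den ≤ K ∧ |g (i + 1) - g i - r| ≤ 1 / Q)).card := by positivity
    have h3 : (0 : ℝ) ≤ d := by positivity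
    linarith
  set P : ℕ → Prop := fun i => ∃ r : ℚ, r.den ≤ K ∧ |g (i + 1) - g i - r| ≤ 1 / Q with hP
  obtain ⟨r, hr, hrQ⟩ := Real.exists_rat_abs_sub_le_and_den_le (g (n + 1) - g n) hQ
  have hden : 0 < r.den := r.den_pos
  have hdenr : (1 : ℝ) ≤ r.den := by exact_mod_cast hden
  have hQinv : 1 / ((Q : ℝ) + 1) ≤ 1 / Q := one_div_le_one_div_of_le hQr (by linarith)
  have hmul : (1 : ℝ) / ((Q + 1) * r.den) * r.den = 1 / (Q + 1) := by field_simp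
  by_cases hbad : P n
  · have h1 := ih (d - 1) (by omega) (n + 1) (by omega)
    have hnN : n < N := by omega
    rw [← Finset.insert_Ico_add_one_left_eq_Ico hnN, Finset.sum_insert (by simp),
      Finset.filter_insert, if_pos hbad, Finset.card_insert_of_notMem (by simp)]
    have h2 : ((d - 1 : ℕ) : ℝ) = d - 1 := by rw [Nat.cast_sub (by omega)]; simp
    rw [h2] at h1
    have h3 := Int.fract_nonneg (g n)
    have h4 : D * ((d - 1) / K) ≤ D * (d / K) := by gcongr; linarith
    push_cast
    linarith
  · have hKden : K < r.den := by
      by_contra hlt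
      push Not at hlt
      refine hbad ⟨r, hlt, hr.trans ?_⟩
      refine le_trans ?_ hQinv
      apply one_div_le_one_div_of_le (by positivity)
      nlinarith
    have h1 := ih (d - r.den) (by omega) (n + r.den) (by omega)
    have h2 : ((d - r.den : ℕ) : ℝ) = d - r.den := by rw [Nat.cast_sub (by omega)]
    rw [h2] at h1
    rw [← Finset.sum_Ico_consecutive _ (Nat.le_add_right n r.den) (by omega : n + r.den ≤ N)]
    have hcard : ((Finset.Ico (n + r.den) N).filter P).card ≤ ((Finset.Ico n N).filter P).card :=
      Finset.card_le_card (Finset.filter_subset_filter _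
        (Finset.Ico_subset_Ico_left (Nat.le_add_right _ _)))
    have hcard' : (((Finset.Ico (n + r.den) N).filter P).card : ℝ)
        ≤ ((Finset.Ico n N).filter P).card := by exact_mod_cast hcard
    have hcop : IsCoprime r.num (r.den : ℤ) := by
      rw [Int.isCoprime_iff_nat_coprime]; simpa using r.reduced
    have hblock := le_sum_fract_near_arith hden hcop (g n)
      (1 / Q + μ * (r.den : ℝ) ^ 2) (fun h => g (n + h)) (by
        intro h hh
        have h3 := abs_sub_tangent_le hκ hg hg' hμ n h (by omega)
        have hhr : (h : ℝ) ≤ r.den := by exact_mod_cast hh.le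
        have h4 : (r : ℝ) = r.num / r.den := Rat.cast_def r
        rw [h4] at hr
        have h5 : |(h : ℝ) * (g (n + 1) - g n - r.num / r.den)| ≤ 1 / Q := by
          rw [abs_mul, Nat.abs_cast]
          calc (h : ℝ) * |g (n + 1) - g n - r.num / r.den|
              ≤ r.den * (1 / ((Q + 1) * r.den)) := by gcongr
            _ = 1 / (Q + 1) := by field_simp
            _ ≤ 1 / Q := hQinv
        have h6 : (h : ℝ) ^ 2 * μ ≤ μ * (r.den : ℝ) ^ 2 := by
          rw [mul_comm]; gcongr
        have h7 : g (n + h) - (g n + h * (r.num / r.den : ℝ)) =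
          (g (n + h) - (g n + h * (g (n + 1) - g n)))
            + (h : ℝ) * (g (n + 1) - g n - r.num / r.den) := by ring
        rw [h7]
        refine (abs_add_le _ _).trans ?_
        linarith)
    rw [Finset.sum_Ico_eq_sum_range (fun i => Int.fract (g i)) n (n + r.den),
      Nat.add_sub_cancel_left]
    have hrQr : (r.den : ℝ) ≤ Q := by exact_mod_cast hrQ
    have h8 : (r.den : ℝ) * (1 / Q) ≤ 1 := by rw [mul_one_div, div_le_one hQr]; exact hrQr
    have h9 : (r.den : ℝ) ^ 3 * μ ≤ Q ^ 3 * μ := by gcongr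
    have h10 : D ≤ D * (r.den / K) := by
      have : (1 : ℝ) ≤ r.den / K := by
        rw [le_div_iff₀ hKr, one_mul]; exact_mod_cast hKden.le
      nlinarith
    have h11 : D * ((d - r.den) / K) = D * (d / K) - D * (r.den / K) := by ring
    have h12 : 2 * (r.den : ℝ) * (1 / Q + μ * (r.den : ℝ) ^ 2) ≤ D - 1 / 2 := by
      rw [hD]
      have : 2 * (r.den : ℝ) * (1 / Q + μ * (r.den : ℝ) ^ 2)
        = 2 * (r.den * (1 / Q)) + 2 * ((r.den : ℝ) ^ 3 * μ) := by ring
      rw [this]; linarith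
    rw [h11] at h1
    linarith

open Classical in
lemma sum_fract_ge {g : ℕ → ℝ} {N : ℕ} {κ μ B : ℝ} (hκ : 0 < κ) (hμ : 0 ≤ μ)
    (hg : ∀ n, n + 2 ≤ N → κ ≤ 2 * g (n + 1) - g n - g (n + 2))
    (hg' : ∀ n, n + 2 ≤ N → 2 * g (n + 1) - g n - g (n + 2) ≤ μ)
    (hB0 : 0 ≤ B) (hB : ∀ n, n + 1 ≤ N → |g (n + 1) - g n| ≤ B)
    {Q K : ℕ} (hQ : 0 < Q) (hK : 0 < K) :
    (N : ℝ) / 2 - (5 / 2 + 2 * μ * (Q : ℝ) ^ 3) * (N / K)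
      - (2 * K * (B + 1) + 1) * K * (2 * (1 / Q) / κ + 1) - Q
      ≤ ∑ i ∈ Finset.range N, Int.fract (g i) := by
  have h1 := sum_fract_ge_aux hκ.le hμ hg hg' hQ hK N 0 (by simp)
  rw [← Finset.range_eq_Ico] at h1
  refine le_trans ?_ h1
  have hQr : (0 : ℝ) < Q := by exact_mod_cast hQ
  set P : ℤ := ⌊(K : ℝ) * (B + 1)⌋ with hP
  have hP0 : 0 ≤ P := by rw [hP]; positivity
  set I := Finset.Icc (-P) P ×ˢ Finset.Icc 1 K with hI
  have hsub : (Finset.range N).filter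
      (fun i => ∃ r : ℚ, r.den ≤ K ∧ |g (i + 1) - g i - r| ≤ 1 / Q) ⊆
      I.biUnion (fun pq => (Finset.range N).filter
        (fun n => |g (n + 1) - g n - (pq.1 / pq.2 : ℝ)| ≤ 1 / Q)) := by
    intro i hi
    obtain ⟨hi, r, hrK, hr⟩ := Finset.mem_filter.1 hi
    rw [Finset.mem_biUnion]
    have h4 : (r : ℝ) = r.num / r.den := Rat.cast_def r
    refine ⟨(r.num, r.den), ?_, Finset.mem_filter.2 ⟨hi, by rw [← h4]; exact hr⟩⟩
    have hb := abs_le.1 (hB i (Finset.mem_range.1 hi))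
    have hr' := abs_le.1 hr
    have hden : (1 : ℝ) ≤ r.den := by exact_mod_cast r.den_pos
    have hQ1 : 1 / (Q : ℝ) ≤ 1 := by
      rw [div_le_one hQr]; exact_mod_cast hQ
    have hKr : (r.den : ℝ) ≤ K := by exact_mod_cast hrK
    have hnum : (r.num : ℝ) = r * r.den := by rw [h4]; field_simp
    have hup : (r.num : ℝ) ≤ K * (B + 1) := by
      rw [hnum]; nlinarith
    have hlo : -(r.num : ℝ) ≤ K * (B + 1) := by
      rw [hnum]; nlinarith
    rw [hI, Finset.mem_product, Finset.mem_Icc, Finset.mem_Icc]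
    refine ⟨⟨?_, Int.le_floor.2 hup⟩, r.den_pos, hrK⟩
    have : -r.num ≤ P := Int.le_floor.2 (by push_cast; exact hlo)
    linarith
  have hcard : (((Finset.range N).filter
      (fun i => ∃ r : ℚ, r.den ≤ K ∧ |g (i + 1) - g i - r| ≤ 1 / Q)).card : ℝ)
      ≤ (2 * K * (B + 1) + 1) * K * (2 * (1 / Q) / κ + 1) := by
    have h2 := (Finset.card_le_card hsub).trans Finset.card_biUnion_le
    have h3 : (((Finset.range N).filter
      (fun i => ∃ r : ℚ, r.den ≤ K ∧ |g (i + 1) - g i - r| ≤ 1 / Q)).card : ℝ) ≤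
      ∑ pq ∈ I, (((Finset.range N).filter
        (fun n => |g (n + 1) - g n - (pq.1 / pq.2 : ℝ)| ≤ 1 / Q)).card : ℝ) := by
      exact_mod_cast h2
    refine h3.trans ?_
    refine (Finset.sum_le_card_nsmul _ _ (2 * (1 / (Q : ℝ)) / κ + 1)
      (fun pq _ => card_slope_near_le hκ hg _ _ (by positivity))).trans ?_
    rw [nsmul_eq_mul]
    gcongr
    have hIc : (I.card : ℝ) = (2 * P + 1 : ℤ) * K := by
      rw [hI, Finset.card_product, Int.card_Icc, Nat.card_Icc]
      push_cast
      have : ((P + 1 - -P).toNat : ℤ) = 2 * P + 1 := by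
        rw [Int.toNat_of_nonneg (by linarith)]; ring
      have h' : (((P + 1 - -P).toNat : ℕ) : ℝ) = ((2 * P + 1 : ℤ) : ℝ) := by exact_mod_cast this
      rw [h']; push_cast; simp
    rw [hIc]
    have hPf : (P : ℝ) ≤ K * (B + 1) := Int.floor_le _
    have hP2 : 2 * (P : ℝ) + 1 ≤ 2 * K * (B + 1) + 1 := by linarith
    push_cast
    gcongr
  linarith

lemma second_diff_bounds {r η n u v z : ℝ} (hη : 0 < η) (hn : 0 ≤ n) (hnr : n + 2 ≤ r)
    (hηz : η ≤ z) (hzv : z ≤ v) (hvu : v ≤ u) (hur : u ≤ r)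
    (huv : u ^ 2 - v ^ 2 = 2 * n + 1) (hvz : v ^ 2 - z ^ 2 = 2 * n + 3) :
    1 / r ≤ 2 * v - u - z ∧ 2 * v - u - z ≤ 2 * r ^ 2 / η ^ 3 := by
  have hr : 0 < r := by linarith
  have hx : (v - z) * (v + z) = 2 * n + 3 := by linarith [hvz]
  have hy : (u - v) * (u + v) = 2 * n + 1 := by linarith [huv]
  constructor
  · rw [div_le_iff₀ hr]
    have h1 : 2 ≤ (2 * v - u - z) * (u + v) := by nlinarith
    have h2 : 0 ≤ 2 * v - u - z := by
      by_contra h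
      push Not at h
      nlinarith
    nlinarith
  · have h1 : (v - z) * η ≤ r := by nlinarith
    have h2 : (u - z) * η ≤ 2 * r := by nlinarith
    have h3 : (2 * v - u - z) * (u + v) = 2 + (v - z) * (u - z) := by nlinarith
    have h4 : ((v - z) * η) * ((u - z) * η) ≤ r * (2 * r) :=
      mul_le_mul h1 h2 (mul_nonneg (by linarith) hη.le) hr.le
    have h5 : 0 ≤ 2 * v - u - z := by
      by_contra h
      push Not at h
      nlinarith [mul_nonneg (sub_nonneg.2 hzv) (sub_nonneg.2 (hzv.trans hvu))]
    rw [le_div_iff₀ (by positivity)]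
    have h6 : (2 * v - u - z) * (2 * η) ≤ 2 + (v - z) * (u - z) := by
      rw [← h3]; apply mul_le_mul_of_nonneg_left _ h5; linarith
    have h7 : η ^ 2 ≤ r ^ 2 := by gcongr; linarith
    have h8 : (2 * v - u - z) * (2 * η) * η ^ 2 ≤ (2 + (v - z) * (u - z)) * η ^ 2 := by gcongr
    nlinarith

set_option maxHeartbeats 1000000 in
lemma sum_fract_circle_ge {A : ℝ} {a r : ℝ} (ha : 1 ≤ a) (haA : a ≤ A) (hr : 1 ≤ r) :
    r / 2 - (25 * A ^ 2 + 17) * r ^ (11 / 12 : ℝ)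
      ≤ ∑ n ∈ Finset.Icc 1 ⌊r⌋₊, Int.fract (√(r ^ 2 - (n : ℝ) ^ 2) / a ^ 2) := by
  have hr0 : 0 < r := by linarith
  set T : ℝ := r ^ (1 / 24 : ℝ) with hT
  have hT1 : 1 ≤ T := Real.one_le_rpow hr (by norm_num)
  have hT0 : 0 < T := by linarith
  have hT24 : T ^ 24 = r := by
    rw [hT, ← Real.rpow_natCast, ← Real.rpow_mul hr0.le]; norm_num
  have hT22 : r ^ (11 / 12 : ℝ) = T ^ 22 := by
    rw [hT, ← Real.rpow_natCast, ← Real.rpow_mul hr0.le]; norm_num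
  rw [hT22]
  set g : ℕ → ℝ := fun n => √(r ^ 2 - (n : ℝ) ^ 2) / a ^ 2 with hg
  set N : ℕ := ⌊r * (1 - 1 / T ^ 2)⌋₊ with hN
  have hTinv : 1 / T ^ 2 ≤ 1 := by
    rw [div_le_one (by positivity)]; exact one_le_pow₀ hT1
  have hTinv0 : 0 < 1 / T ^ 2 := by positivity
  have hNle : (N : ℝ) ≤ r * (1 - 1 / T ^ 2) :=
    Nat.floor_le (mul_nonneg hr0.le (by linarith))
  have hNge : r - T ^ 22 - 1 ≤ N := by
    have h1 := Nat.lt_floor_add_one (r * (1 - 1 / T ^ 2))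
    have h2 : r * (1 - 1 / T ^ 2) = r - T ^ 22 := by
      rw [← hT24]; field_simp
    rw [h2] at h1; rw [hN, h2]; linarith
  have hNr : (N : ℝ) ≤ r := by nlinarith
  have hη : 0 < r / T := by positivity
  have hηN : ∀ n : ℕ, n ≤ N → r / T ≤ √(r ^ 2 - (n : ℝ) ^ 2) := by
    intro n hn
    have hn' : (n : ℝ) ≤ r * (1 - 1 / T ^ 2) := le_trans (by exact_mod_cast hn) hNle
    apply Real.le_sqrt_of_sq_le
    have h1 : (n : ℝ) ^ 2 ≤ (r * (1 - 1 / T ^ 2)) ^ 2 := by gcongr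
    have h2 : (r / T) ^ 2 = r ^ 2 * (1 / T ^ 2) := by field_simp
    rw [h2]
    nlinarith [mul_nonneg (sq_nonneg r) (mul_nonneg hTinv0.le (sub_nonneg.2 hTinv))]
  have hsq : ∀ n : ℕ, n ≤ N → √(r ^ 2 - (n : ℝ) ^ 2) ^ 2 = r ^ 2 - (n : ℝ) ^ 2 := by
    intro n hn
    apply Real.sq_sqrt
    have : (n : ℝ) ≤ N := by exact_mod_cast hn
    nlinarith [(Nat.cast_nonneg n : (0 : ℝ) ≤ n)]
  have hmono : ∀ n m : ℕ, n ≤ m → √(r ^ 2 - (m : ℝ) ^ 2) ≤ √(r ^ 2 - (n : ℝ) ^ 2) := by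
    intro n m h
    apply Real.sqrt_le_sqrt
    gcongr
  have hler : ∀ n : ℕ, √(r ^ 2 - (n : ℝ) ^ 2) ≤ r := by
    intro n
    rw [Real.sqrt_le_left hr0.le]; nlinarith [sq_nonneg (n : ℝ)]
  have ha2 : 1 ≤ a ^ 2 := one_le_pow₀ ha
  have ha0 : 0 < a ^ 2 := by linarith
  have hsd : ∀ n, n + 2 ≤ N → 1 / r ≤ 2 * √(r ^ 2 - ((n + 1 : ℕ) : ℝ) ^ 2)
      - √(r ^ 2 - (n : ℝ) ^ 2) - √(r ^ 2 - ((n + 2 : ℕ) : ℝ) ^ 2) ∧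
      2 * √(r ^ 2 - ((n + 1 : ℕ) : ℝ) ^ 2)
      - √(r ^ 2 - (n : ℝ) ^ 2) - √(r ^ 2 - ((n + 2 : ℕ) : ℝ) ^ 2) ≤ 2 * r ^ 2 / (r / T) ^ 3 := by
    intro n hn
    have hn' : (n : ℝ) + 2 ≤ r := le_trans (by exact_mod_cast hn) hNr
    refine second_diff_bounds (n := n) hη (by positivity) hn' (hηN _ hn)
      (hmono _ _ (by omega)) (hmono _ _ (by omega)) (hler n) ?_ ?_
    · rw [hsq n (by omega), hsq (n + 1) (by omega)]; push_cast; ring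
    · rw [hsq (n + 2) (by omega), hsq (n + 1) (by omega)]; push_cast; ring
  have hgd : ∀ n, 2 * g (n + 1) - g n - g (n + 2) = (2 * √(r ^ 2 - ((n + 1 : ℕ) : ℝ) ^ 2)
      - √(r ^ 2 - (n : ℝ) ^ 2) - √(r ^ 2 - ((n + 2 : ℕ) : ℝ) ^ 2)) / a ^ 2 := by
    intro n; simp only [hg]; ring
  have hκ : (0 : ℝ) < 1 / (a ^ 2 * r) := by positivity
  have hμ : (0 : ℝ) ≤ 2 * T ^ 3 / r := by positivity
  have hg1 : ∀ n, n + 2 ≤ N → 1 / (a ^ 2 * r) ≤ 2 * g (n + 1) - g n - g (n + 2) := by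
    intro n hn
    rw [hgd, mul_comm, ← div_div]
    exact div_le_div_of_nonneg_right (hsd n hn).1 ha0.le
  have hg2 : ∀ n, n + 2 ≤ N → 2 * g (n + 1) - g n - g (n + 2) ≤ 2 * T ^ 3 / r := by
    intro n hn
    rw [hgd]
    have h1 := hsd n hn
    have h2 : 2 * r ^ 2 / (r / T) ^ 3 = 2 * T ^ 3 / r := by field_simp
    rw [h2] at h1
    refine le_trans (div_le_self ?_ ha2) h1.2
    exact le_trans (by positivity) h1.1
  have hB : ∀ n, n + 1 ≤ N → |g (n + 1) - g n| ≤ T := by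
    intro n hn
    have h1 := hsq n (by omega)
    have h2 := hsq (n + 1) hn
    have h3 := hmono n (n + 1) (by omega)
    have h4 := hηN (n + 1) hn
    have hn' : (n : ℝ) + 1 ≤ r := le_trans (by exact_mod_cast hn) hNr
    have h5 : g (n + 1) - g n =
      -((√(r ^ 2 - (n : ℝ) ^ 2) - √(r ^ 2 - ((n + 1 : ℕ) : ℝ) ^ 2)) / a ^ 2) := by
      simp only [hg]; ring
    rw [h5, abs_neg, abs_of_nonneg (div_nonneg (by linarith) ha0.le)]
    refine le_trans (div_le_self (by linarith) ha2) ?_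
    push_cast at *
    set u := √(r ^ 2 - (n : ℝ) ^ 2)
    set v := √(r ^ 2 - ((n : ℝ) + 1) ^ 2)
    have h6 : (u - v) * (u + v) = 2 * n + 1 := by nlinarith
    have h7 : (u - v) * (r / T) ≤ r := by nlinarith
    have h8 : (u - v) * (r / T) = (u - v) / T * r := by ring
    rw [h8] at h7
    have h9 : (u - v) / T ≤ 1 := by
      by_contra h; push Not at h; nlinarith
    rwa [div_le_one hT0] at h9
  have hT7 : (1 : ℝ) ≤ T ^ 7 := one_le_pow₀ hT1
  have hT2 : (1 : ℝ) ≤ T ^ 2 := one_le_pow₀ hT1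
  have hQ : 0 < ⌊T ^ 7⌋₊ := Nat.floor_pos.2 hT7
  have hK : 0 < ⌊T ^ 2⌋₊ := Nat.floor_pos.2 hT2
  have hmain := sum_fract_ge hκ hμ hg1 hg2 hT0.le hB hQ hK
  have hfl : ∀ x : ℝ, 1 ≤ x → x / 2 ≤ (⌊x⌋₊ : ℝ) := by
    intro x hx
    have h1 := Nat.lt_floor_add_one x
    have h2 : (1 : ℝ) ≤ ⌊x⌋₊ := by exact_mod_cast Nat.floor_pos.2 hx
    linarith
  set Q := ⌊T ^ 7⌋₊
  set K := ⌊T ^ 2⌋₊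
  have hQ1 : (Q : ℝ) ≤ T ^ 7 := Nat.floor_le (by positivity)
  have hK1 : (K : ℝ) ≤ T ^ 2 := Nat.floor_le (by positivity)
  have hQ2 : T ^ 7 / 2 ≤ Q := hfl _ hT7
  have hK2 : T ^ 2 / 2 ≤ K := hfl _ hT2
  have hT22' : (1 : ℝ) ≤ T ^ 22 := one_le_pow₀ hT1
  have e1 : 2 * (2 * T ^ 3 / r) * (Q : ℝ) ^ 3 ≤ 4 := by
    calc 2 * (2 * T ^ 3 / r) * (Q : ℝ) ^ 3 ≤ 2 * (2 * T ^ 3 / r) * (T ^ 7) ^ 3 := by gcongr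
      _ = 4 := by rw [← hT24]; field_simp; norm_num
  have e2 : (N : ℝ) / K ≤ 2 * T ^ 22 := by
    calc (N : ℝ) / K ≤ r / (T ^ 2 / 2) := by gcongr
      _ = 2 * T ^ 22 := by rw [← hT24]; field_simp
  have e3 : (5 / 2 + 2 * (2 * T ^ 3 / r) * (Q : ℝ) ^ 3) * (N / K) ≤ 7 * (2 * T ^ 22) := by
    gcongr; linarith
  have e4 : (2 * K * (T + 1) + 1 : ℝ) ≤ 5 * T ^ 3 := by
    have : (2 * K * (T + 1) : ℝ) ≤ 2 * T ^ 2 * (T + T) := by gcongr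
    have h3 : (1 : ℝ) ≤ T ^ 3 := one_le_pow₀ hT1
    nlinarith
  have hA0 : 0 < A := by linarith
  have e5 : 2 * (1 / (Q : ℝ)) / (1 / (a ^ 2 * r)) + 1 ≤ 5 * A ^ 2 * T ^ 17 := by
    have h1 : 2 * (1 / (Q : ℝ)) / (1 / (a ^ 2 * r)) ≤ 4 * A ^ 2 * T ^ 17 := by
      calc 2 * (1 / (Q : ℝ)) / (1 / (a ^ 2 * r)) ≤ 2 * (1 / (T ^ 7 / 2)) / (1 / (A ^ 2 * r)) := by
            gcongr
        _ = 4 * A ^ 2 * T ^ 17 := by rw [← hT24]; field_simp; ring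
    have h2 : (1 : ℝ) ≤ T ^ 17 := one_le_pow₀ hT1
    have h3 : (1 : ℝ) ≤ A ^ 2 := one_le_pow₀ (ha.trans haA)
    nlinarith
  have e6 : (2 * K * (T + 1) + 1) * K * (2 * (1 / (Q : ℝ)) / (1 / (a ^ 2 * r)) + 1)
      ≤ 5 * T ^ 3 * T ^ 2 * (5 * A ^ 2 * T ^ 17) := by gcongr
  have e7 : T ^ 7 ≤ T ^ 22 := pow_le_pow_right₀ hT1 (by norm_num)
  have e8 : ∑ i ∈ Finset.range N, Int.fract (g i) ≤
      1 + ∑ n ∈ Finset.Icc 1 ⌊r⌋₊, Int.fract (g n) := by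
    have h1 : Finset.range N ⊆ insert 0 (Finset.Icc 1 ⌊r⌋₊) := by
      intro i hi
      have : i < N := Finset.mem_range.1 hi
      have h2 : N ≤ ⌊r⌋₊ := Nat.le_floor hNr
      rw [Finset.mem_insert, Finset.mem_Icc]; omega
    refine (Finset.sum_le_sum_of_subset_of_nonneg h1 fun i _ _ => Int.fract_nonneg _).trans ?_
    rw [Finset.sum_insert (by simp)]
    have := (Int.fract_lt_one (g 0)).le
    linarith
  have e9 : 5 * T ^ 3 * T ^ 2 * (5 * A ^ 2 * T ^ 17) = 25 * A ^ 2 * T ^ 22 := by ring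
  rw [e9] at e6
  have e10 : (25 * A ^ 2 + 17) * T ^ 22 = 25 * A ^ 2 * T ^ 22 + 17 * T ^ 22 := by ring
  linarith

lemma concaveOn_semicircle (r : ℝ) :
    ConcaveOn ℝ (Set.Icc (-r) r) (fun x => √(r ^ 2 - x ^ 2)) := by
  refine ⟨convex_Icc _ _, ?_⟩
  intro x hx y hy s t hs ht hst
  have h1 : 0 ≤ r ^ 2 - x ^ 2 := by nlinarith [hx.1, hx.2]
  have h2 : 0 ≤ r ^ 2 - y ^ 2 := by nlinarith [hy.1, hy.2]
  simp only [smul_eq_mul]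
  apply Real.le_sqrt_of_sq_le
  have e1 := Real.sq_sqrt h1
  have e2 := Real.sq_sqrt h2
  set u := √(r ^ 2 - x ^ 2)
  set v := √(r ^ 2 - y ^ 2)
  have h3 : u * v + x * y ≤ r ^ 2 := by nlinarith [sq_nonneg (u - v), sq_nonneg (x - y)]
  have ht' : t = 1 - s := by linarith
  subst ht'
  nlinarith [mul_nonneg hs ht]

lemma integral_semicircle_right {r : ℝ} (hr : 0 < r) :
    ∫ x in (0 : ℝ)..r, √(r ^ 2 - x ^ 2) = π * r ^ 2 / 4 := by
  have hc : Continuous fun x : ℝ => √(1 - x ^ 2) := by fun_prop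
  have h1 : ∫ x in (0 : ℝ)..1, √(1 - x ^ 2) = π / 4 := by
    have h2 := integral_sqrt_one_sub_sq
    rw [← intervalIntegral.integral_add_adjacent_intervals (b := 0)
      (hc.intervalIntegrable _ _) (hc.intervalIntegrable _ _)] at h2
    have h3 : ∫ x in (-1 : ℝ)..0, √(1 - x ^ 2) = ∫ x in (0 : ℝ)..1, √(1 - x ^ 2) := by
      have := intervalIntegral.integral_comp_neg (a := (0 : ℝ)) (b := 1)
        (fun x : ℝ => √(1 - x ^ 2))
      simp only [neg_zero] at this
      rw [← this]; simp
    linarith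
  have h4 := intervalIntegral.integral_comp_mul_left (a := 0) (b := 1)
    (fun x : ℝ => √(r ^ 2 - x ^ 2)) hr.ne'
  have h5 : ∀ x : ℝ, √(r ^ 2 - (r * x) ^ 2) = r * √(1 - x ^ 2) := by
    intro x
    rw [show r ^ 2 - (r * x) ^ 2 = r ^ 2 * (1 - x ^ 2) by ring,
      Real.sqrt_mul (by positivity), Real.sqrt_sq hr.le]
  simp only [h5, mul_zero, mul_one, smul_eq_mul] at h4
  rw [intervalIntegral.integral_const_mul, h1, eq_comm, inv_mul_eq_iff_eq_mul₀ hr.ne'] at h4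
  rw [h4]; ring

lemma trapezoid_le_integral {f : ℝ → ℝ} {x : ℝ} (hf : Continuous f)
    (hc : ConcaveOn ℝ (Set.Icc x (x + 1)) f) :
    (f x + f (x + 1)) / 2 ≤ ∫ y in x..(x + 1), f y := by
  have h1 : ∫ y in (0 : ℝ)..1, (f x + y * (f (x + 1) - f x)) = (f x + f (x + 1)) / 2 := by
    rw [intervalIntegral.integral_add (by simp) (by
      apply Continuous.intervalIntegrable; fun_prop), intervalIntegral.integral_mul_const,
      integral_id]
    simp; ring
  have h2 : ∫ y in (0 : ℝ)..1, f (x + y) = ∫ y in x..(x + 1), f y := by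
    rw [intervalIntegral.integral_comp_add_left]; simp
  rw [← h1, ← h2]
  apply intervalIntegral.integral_mono_on (by norm_num)
  · apply Continuous.intervalIntegrable; fun_prop
  · apply Continuous.intervalIntegrable; fun_prop
  · intro y hy
    have := hc.2 (x := x) (y := x + 1) (by simp) (by simp) (sub_nonneg.2 hy.2) hy.1 (by ring)
    simp only [smul_eq_mul] at this
    rw [show (1 - y) * x + y * (x + 1) = x + y by ring] at this
    linarith

lemma sum_semicircle_le {r : ℝ} (hr : 1 ≤ r) :
    ∑ n ∈ Finset.Icc 1 ⌊r⌋₊, √(r ^ 2 - (n : ℝ) ^ 2) ≤ π * r ^ 2 / 4 - r / 2 + √(2 * r) / 2 := by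
  have hr0 : 0 < r := by linarith
  set w : ℝ → ℝ := fun x => √(r ^ 2 - x ^ 2) with hw
  have hcont : Continuous w := by fun_prop
  have hM : (⌊r⌋₊ : ℝ) ≤ r := Nat.floor_le hr0.le
  have hM2 := Nat.lt_floor_add_one r
  set M := ⌊r⌋₊
  have hstep : ∀ m : ℕ, m ≤ M → w 0 / 2 + ∑ n ∈ Finset.Icc 1 m, w n - w m / 2 ≤
      ∫ x in (0 : ℝ)..m, w x := by
    intro m
    induction m with
    | zero => intro _; simp
    | succ m ih =>
      intro hm
      have h1 := ih (by omega)
      have hm' : (m : ℝ) + 1 ≤ r := le_trans (by exact_mod_cast hm) hM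
      have h2 : (w m + w (m + 1)) / 2 ≤ ∫ y in (m : ℝ)..(m + 1), w y :=
        trapezoid_le_integral hcont ((concaveOn_semicircle r).subset (by
          apply Set.Icc_subset_Icc _ hm'
          have : (0 : ℝ) ≤ m := by positivity
          linarith) (convex_Icc _ _))
      rw [Finset.sum_Icc_succ_top (by omega)]
      push_cast
      rw [← intervalIntegral.integral_add_adjacent_intervals (b := (m : ℝ))
        (hcont.intervalIntegrable _ _) (hcont.intervalIntegrable _ _)]
      linarith
  have h1 := hstep M le_rfl
  have h2 : ∫ x in (0 : ℝ)..M, w x ≤ ∫ x in (0 : ℝ)..r, w x := by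
    apply intervalIntegral.integral_mono_interval le_rfl (by positivity) hM
    · exact Filter.Eventually.of_forall fun x => Real.sqrt_nonneg _
    · exact hcont.intervalIntegrable _ _
  rw [show ∫ x in (0 : ℝ)..r, w x = π * r ^ 2 / 4 from integral_semicircle_right hr0] at h2
  have h3 : w 0 = r := by simp [hw, Real.sqrt_sq hr0.le]
  have h4 : w M ≤ √(2 * r) := by
    apply Real.sqrt_le_sqrt
    nlinarith [(Nat.cast_nonneg M : (0 : ℝ) ≤ M)]
  rw [h3] at h1
  change ∑ n ∈ Finset.Icc 1 M, w n ≤ _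
  linarith

/-- The positive lattice points of the ellipse `(m / a)² + (n a)² ≤ R²`. -/
def latticePts (a R : ℝ) : Finset (ℕ × ℕ) :=
  (Finset.Icc 1 ⌊a * R⌋₊).sigma (fun m => Finset.Icc 1 ⌊√((a * R) ^ 2 - (m : ℝ) ^ 2) / a ^ 2⌋₊)
    |>.map (Equiv.sigmaEquivProd ℕ ℕ).toEmbedding

lemma mem_latticePts {a R : ℝ} (ha : 0 < a) (hR : 0 ≤ R) {m n : ℕ} (hm : 0 < m) (hn : 0 < n)
    (h : (m / a) ^ 2 + (n * a) ^ 2 ≤ R ^ 2) : (m, n) ∈ latticePts a R := by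
  have hn' : (0 : ℝ) < n := by exact_mod_cast hn
  have h1 : (m : ℝ) ^ 2 + (n * a ^ 2) ^ 2 ≤ (a * R) ^ 2 := by
    have : (m : ℝ) ^ 2 + (n * a ^ 2) ^ 2 = a ^ 2 * ((m / a) ^ 2 + (n * a) ^ 2) := by field_simp
    rw [this, mul_pow a R]; gcongr
  rw [latticePts, Finset.mem_map]
  refine ⟨⟨m, n⟩, ?_, rfl⟩
  simp only [Finset.mem_sigma, Finset.mem_Icc]
  refine ⟨⟨hm, Nat.le_floor ?_⟩, hn, Nat.le_floor ?_⟩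
  · apply le_of_sq_le_sq _ (by positivity)
    nlinarith [sq_nonneg ((n : ℝ) * a ^ 2)]
  · rw [le_div_iff₀ (by positivity)]
    apply Real.le_sqrt_of_sq_le
    linarith

lemma card_latticePts_le {A a R : ℝ} (ha : 1 ≤ a) (haA : a ≤ A) (hR : 1 ≤ R) :
    ((latticePts a R).card : ℝ) ≤ π * R ^ 2 / 4 - (a + 1 / a) * R / 2
      + (25 * A ^ 2 + 19) * A * R ^ (11 / 12 : ℝ) := by
  have ha0 : 0 < a := by linarith
  have hr : 1 ≤ a * R := by nlinarith
  have h1 := sum_fract_circle_ge ha haA hr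
  have h2 := sum_semicircle_le hr
  have h3 : ((latticePts a R).card : ℝ) = ∑ n ∈ Finset.Icc 1 ⌊a * R⌋₊,
      (√((a * R) ^ 2 - (n : ℝ) ^ 2) / a ^ 2
        - Int.fract (√((a * R) ^ 2 - (n : ℝ) ^ 2) / a ^ 2)) := by
    rw [latticePts, Finset.card_map, Finset.card_sigma]
    push_cast
    refine Finset.sum_congr rfl fun n _ => ?_
    rw [Int.self_sub_fract, Nat.card_Icc, Nat.add_sub_cancel,
      natCast_floor_eq_intCast_floor (by positivity)]
  rw [h3, Finset.sum_sub_distrib, ← Finset.sum_div]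
  have h4 : (∑ n ∈ Finset.Icc 1 ⌊a * R⌋₊, √((a * R) ^ 2 - (n : ℝ) ^ 2)) / a ^ 2 ≤
      (π * (a * R) ^ 2 / 4 - a * R / 2 + √(2 * (a * R)) / 2) / a ^ 2 := by gcongr
  have h5 : (π * (a * R) ^ 2 / 4 - a * R / 2 + √(2 * (a * R)) / 2) / a ^ 2 =
      π * R ^ 2 / 4 - 1 / a * R / 2 + √(2 * (a * R)) / 2 / a ^ 2 := by
    field_simp
  have h6 : √(2 * (a * R)) / 2 / a ^ 2 ≤ √(2 * (a * R)) / 2 :=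
    div_le_self (by positivity) (one_le_pow₀ ha)
  have h7 : √(2 * (a * R)) / 2 ≤ 2 * (a * R) ^ (11 / 12 : ℝ) := by
    rw [Real.sqrt_mul (by norm_num)]
    have e1 : √(a * R) ≤ (a * R) ^ (11 / 12 : ℝ) := by
      rw [Real.sqrt_eq_rpow]
      exact Real.rpow_le_rpow_of_exponent_le hr (by norm_num)
    have e2 : √2 ≤ 2 := by rw [Real.sqrt_le_left (by norm_num)]; norm_num
    have e3 : 0 ≤ √(a * R) := Real.sqrt_nonneg _
    nlinarith
  have h8 : (a * R) ^ (11 / 12 : ℝ) ≤ A * R ^ (11 / 12 : ℝ) := by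
    rw [Real.mul_rpow ha0.le (by linarith)]
    gcongr
    calc a ^ (11 / 12 : ℝ) ≤ a ^ (1 : ℝ) :=
          Real.rpow_le_rpow_of_exponent_le ha (by norm_num)
      _ ≤ A := by rwa [Real.rpow_one]
  have h9 : (25 * A ^ 2 + 19) * (a * R) ^ (11 / 12 : ℝ) ≤
      (25 * A ^ 2 + 19) * (A * R ^ (11 / 12 : ℝ)) := by gcongr
  have h10 : (a + 1 / a) * R / 2 = a * R / 2 + 1 / a * R / 2 := by ring
  linarith

lemma hasSum_sine_sq {L : ℝ} (hL : 0 < L) {v : ℝ → ℝ} (hv : Continuous v)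
    (hs : Function.support v ⊆ Set.Ioo 0 L) :
    HasSum (fun m : ℕ => 2 / L * (∫ x, v x * sin (m * π / L * x)) ^ 2) (∫ x, v x ^ 2) := by
  have hcs : HasCompactSupport v :=
    HasCompactSupport.of_support_subset_isCompact isCompact_Icc
      (hs.trans Set.Ioo_subset_Icc_self)
  set V : ℝ → ℂ := fun x => ((v x - v (-x) : ℝ) : ℂ) with hV
  have hVc : Continuous V := by fun_prop
  have hLL : -L < L := by linarith
  have hVs : ∀ x, x ∉ Set.Ioc (-L) L → v x = 0 ∧ v (-x) = 0 := by
    intro x hx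
    constructor
    · by_contra h
      have := hs h
      exact hx ⟨by linarith [this.1], this.2.le⟩
    · by_contra h
      have := hs h
      exact hx ⟨by linarith [this.2], by linarith [this.1]⟩
  have hV0 : ∀ x, x ∉ Set.Ioc (-L) L → V x = 0 := fun x hx => by
    simp [hV, (hVs x hx).1, (hVs x hx).2]
  have hmem : MemLp V 2 (volume.restrict (Set.Ioc (-L) L)) :=
    (hVc.memLp_of_hasCompactSupport (HasCompactSupport.of_support_subset_isCompact
      (isCompact_Icc (a := -L) (b := L)) (fun x hx => by
        by_contra h
        exact hx (hV0 x fun h' => h (Set.Ioc_subset_Icc_self h'))))).restrict _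
  have hP := hasSum_sq_fourierCoeffOn hLL hmem
  have hv2 : Integrable (fun x => v x ^ 2) := by
    apply Continuous.integrable_of_hasCompactSupport (by fun_prop)
    exact hcs.comp_left (g := fun y : ℝ => y ^ 2) (by simp)
  have hnorm : ∫ x in (-L)..L, ‖V x‖ ^ 2 = 2 * ∫ x, v x ^ 2 := by
    rw [intervalIntegral.integral_eq_integral_of_support_subset]
    · have h1 : ∀ x, ‖V x‖ ^ 2 = v x ^ 2 + v (-x) ^ 2 := by
        intro x
        rw [hV, Complex.norm_real, Real.norm_eq_abs, sq_abs]
        have : v x * v (-x) = 0 := by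
          by_contra h
          have h1 := hs (left_ne_zero_of_mul h)
          have h2 := hs (right_ne_zero_of_mul h)
          linarith [h1.1, h2.1]
        linear_combination -2 * this
      simp_rw [h1]
      rw [integral_add hv2 hv2.comp_neg, integral_neg_eq_self (fun x => v x ^ 2)]
      ring
    · intro x hx
      by_contra h
      exact hx (by simp [hV0 x h])
  set S : ℤ → ℝ := fun n => ∫ x, v x * sin (n * π / L * x) with hS
  have hcoef : ∀ n : ℤ, ‖fourierCoeffOn hLL V n‖ ^ 2 = (1 / L ^ 2) * S n ^ 2 := by
    intro n
    have h1 : fourierCoeffOn hLL V n = ((-(1 / L) * S n : ℝ) : ℂ) * Complex.I := by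
      rw [fourierCoeffOn_eq_integral,
        intervalIntegral.integral_eq_integral_of_support_subset (fun x hx => by
          by_contra h; exact hx (by simp [hV0 x h]))]
      have h_int : ∀ c : ℝ, Integrable (fun x => (v x : ℂ) * Complex.exp (c * x * Complex.I)) := by
        intro c
        apply Continuous.integrable_of_hasCompactSupport (by fun_prop)
        exact (hcs.comp_left (g := fun y : ℝ => (y : ℂ)) (by simp)).mul_right
      have h2 : ∀ x : ℝ, (fourier (-n) (x : AddCircle (L - -L))) • V x =
          (v x : ℂ) * Complex.exp ((-(n * π / L) : ℝ) * x * Complex.I)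
          - (v (-x) : ℂ) * Complex.exp ((n * π / L : ℝ) * (-x : ℝ) * Complex.I) := by
        intro x
        rw [fourier_coe_apply]
        have hLc : (L : ℂ) ≠ 0 := by exact_mod_cast hL.ne'
        have e1 : (2 * (π : ℂ) * Complex.I * ((-n : ℤ) : ℂ) * x / ((L - -L : ℝ) : ℂ)) =
          (-(n * π / L) : ℝ) * x * Complex.I := by
          push_cast; field_simp; ring
        have e2 : ((n * π / L : ℝ) : ℂ) * (-x : ℝ) * Complex.I =
          (-(n * π / L) : ℝ) * x * Complex.I := by push_cast; ring
        rw [e1, e2, hV]; push_cast; simp only [smul_eq_mul]; ring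
      simp_rw [h2]
      have h3 := integral_neg_eq_self
        (fun x : ℝ => (v x : ℂ) * Complex.exp ((n * π / L : ℝ) * x * Complex.I)) volume
      rw [integral_sub (h_int _) (h_int (n * π / L)).comp_neg, h3, ← integral_sub (h_int _) (h_int _)]
      have h4 : ∀ x : ℝ, (v x : ℂ) * Complex.exp ((-(n * π / L) : ℝ) * x * Complex.I)
          - (v x : ℂ) * Complex.exp ((n * π / L : ℝ) * x * Complex.I) =
          ((v x * sin (n * π / L * x) : ℝ) : ℂ) * (-2 * Complex.I) := by
        intro x
        rw [← Complex.ofReal_mul, ← Complex.ofReal_mul, Complex.exp_mul_I, Complex.exp_mul_I,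
          ← Complex.ofReal_cos, ← Complex.ofReal_sin, ← Complex.ofReal_cos, ← Complex.ofReal_sin,
          neg_mul, Real.cos_neg, Real.sin_neg]
        push_cast; ring
      simp_rw [h4]
      rw [integral_mul_const, integral_complex_ofReal]
      have hLc : (L : ℂ) ≠ 0 := by exact_mod_cast hL.ne'
      simp only [hS, Complex.real_smul]
      push_cast
      field_simp
      ring
    rw [h1, norm_mul, Complex.norm_I, mul_one, Complex.norm_real, Real.norm_eq_abs, sq_abs]
    ring
  simp_rw [hcoef] at hP
  have hneg : ∀ n : ℤ, S (-n) = - S n := by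
    intro n
    simp only [hS]
    rw [← integral_neg]
    congr 1; ext x
    push_cast
    rw [show -(n : ℝ) * π / L * x = -(n * π / L * x) by ring, Real.sin_neg]; ring
  have hS0 : S 0 = 0 := by simp [hS]
  rw [hnorm] at hP
  have hnat := hP.nat_add_neg
  rw [hS0] at hnat
  have h5 := hnat.mul_left L
  have e1 : ∀ m : ℕ, 2 / L * (∫ x, v x * sin (m * π / L * x)) ^ 2 =
      L * (1 / L ^ 2 * S m ^ 2 + 1 / L ^ 2 * S (-m) ^ 2) := by
    intro m
    rw [hneg]
    simp only [hS, Int.cast_natCast]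
    field_simp
    ring
  have e2 : L * ((L - -L)⁻¹ • (2 * ∫ x, v x ^ 2) + 1 / L ^ 2 * 0 ^ 2) = ∫ x, v x ^ 2 := by
    rw [smul_eq_mul]; field_simp; ring
  rw [e2] at h5
  simp_rw [e1]
  exact h5

/-- Sine coefficients on the rectangle `(0, L) × (0, H)`. -/
def sineCoeff (L H : ℝ) (u : ℝ × ℝ → ℝ) (m n : ℕ) : ℝ :=
  ∫ p : ℝ × ℝ, u p * (sin (m * π / L * p.1) * sin (n * π / H * p.2))

lemma parseval_sine {L H : ℝ} (hL : 0 < L) (hH : 0 < H) {u : ℝ × ℝ → ℝ} (hu : Continuous u)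
    (hs : Function.support u ⊆ Set.Ioo 0 L ×ˢ Set.Ioo 0 H) :
    ∃ G : ℕ → ℝ, (∀ m, HasSum (fun n => 2 / H * sineCoeff L H u m n ^ 2) (G m)) ∧
      HasSum (fun m => 2 / L * G m) (∫ p, u p ^ 2) := by
  have hcs : HasCompactSupport u :=
    HasCompactSupport.of_support_subset_isCompact (isCompact_Icc.prod isCompact_Icc)
      (hs.trans (Set.prod_mono Set.Ioo_subset_Icc_self Set.Ioo_subset_Icc_self))
  set F : ℕ → ℝ → ℝ := fun m y => ∫ x, u (x, y) * sin (m * π / L * x) with hF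
  have hux : ∀ x y, x ∉ Set.Icc 0 L → u (x, y) = 0 := fun x y hx => by
    by_contra h
    exact hx (Set.Ioo_subset_Icc_self (hs h).1)
  have huy : ∀ x y, y ∉ Set.Ioo 0 H → u (x, y) = 0 := fun x y hy => by
    by_contra h
    exact hy (hs h).2
  have hFs : ∀ m, Function.support (F m) ⊆ Set.Ioo 0 H := by
    intro m y hy
    by_contra h
    exact hy (by simp [hF, huy _ y h])
  have hFc : ∀ m, Continuous (F m) := by
    intro m
    have h1 : F m = fun y => ∫ x in Set.Icc 0 L, u (x, y) * sin (m * π / L * x) := by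
      ext y
      rw [setIntegral_eq_integral_of_forall_compl_eq_zero]
      intro x hx
      rw [hux x y hx, zero_mul]
    rw [h1]
    exact continuous_parametric_integral_of_continuous
      (f := fun y x => u (x, y) * sin (m * π / L * x)) (by fun_prop) isCompact_Icc
  have hFcs : ∀ m, HasCompactSupport (F m) := fun m =>
    HasCompactSupport.of_support_subset_isCompact isCompact_Icc
      ((hFs m).trans Set.Ioo_subset_Icc_self)
  have hF2 : ∀ m, Integrable (fun y => 2 / L * F m y ^ 2) := by
    intro m
    have := hFc m
    apply Continuous.integrable_of_hasCompactSupport (by fun_prop)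
    exact (hFcs m).comp_left (g := fun y : ℝ => 2 / L * y ^ 2) (by simp)
  have hcoef : ∀ m n, sineCoeff L H u m n = ∫ y, F m y * sin (n * π / H * y) := by
    intro m n
    rw [sineCoeff, Measure.volume_eq_prod, integral_prod_symm]
    · congr 1; ext y
      rw [hF, ← integral_mul_const]
      congr 1; ext x; ring
    · rw [← Measure.volume_eq_prod]
      apply Continuous.integrable_of_hasCompactSupport (by fun_prop)
      exact hcs.mul_right
  refine ⟨fun m => ∫ y, F m y ^ 2, fun m => ?_, ?_⟩
  · simp_rw [hcoef]
    exact hasSum_sine_sq hH (hFc m) (hFs m)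
  · have hfib : ∀ y, HasSum (fun m => 2 / L * F m y ^ 2) (∫ x, u (x, y) ^ 2) := by
      intro y
      refine hasSum_sine_sq hL (v := fun x => u (x, y)) (by fun_prop) ?_
      intro x hx
      exact (hs hx).1
    have hu2 : Integrable (fun p => u p ^ 2) := by
      apply Continuous.integrable_of_hasCompactSupport (by fun_prop)
      exact hcs.comp_left (g := fun y : ℝ => y ^ 2) (by simp)
    rw [Measure.volume_eq_prod] at hu2 ⊢
    rw [integral_prod_symm _ hu2]
    have hsummable : Summable fun m => ∫ y, ‖2 / L * F m y ^ 2‖ := by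
      have hnn : ∀ m y, ‖2 / L * F m y ^ 2‖ = 2 / L * F m y ^ 2 := fun m y =>
        Real.norm_of_nonneg (by positivity)
      simp_rw [hnn]
      apply summable_of_sum_le (c := ∫ y, ∫ x, u (x, y) ^ 2)
      · intro m; exact integral_nonneg fun y => by positivity
      · intro s
        rw [← integral_finsetSum _ fun m _ => hF2 m]
        apply integral_mono (integrable_finsetSum _ fun m _ => hF2 m) hu2.integral_prod_right
        intro y
        exact sum_le_hasSum _ (fun m _ => by positivity) (hfib y)
    have hfin := hasSum_integral_of_summable_integral_norm hF2 hsummable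
    simp_rw [integral_const_mul] at hfin
    have : ∀ y, ∑' m, 2 / L * F m y ^ 2 = ∫ x, u (x, y) ^ 2 := fun y => (hfib y).tsum_eq
    simp_rw [this] at hfin
    exact hfin

lemma Adm.pd {Ω : Set (ℝ × ℝ)} {u : ℝ × ℝ → ℝ} (hu : Adm Ω u) (v : ℝ × ℝ) :
    Adm Ω (pd v u) := by
  obtain ⟨h1, h2, h3⟩ := hu
  refine ⟨?_, h2.fderiv_apply (𝕜 := ℝ) v, ?_⟩
  · exact (h1.fderiv_right (m := (⊤ : ℕ∞)) (by norm_cast)).clm_apply contDiff_const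
  · exact (tsupport_fderiv_apply_subset ℝ v).trans h3

lemma integral_pd_mul {Ω : Set (ℝ × ℝ)} {u φ : ℝ × ℝ → ℝ} (hu : Adm Ω u)
    (hφ : ContDiff ℝ (⊤ : ℕ∞) φ) (v : ℝ × ℝ) :
    ∫ p, pd v u p * φ p = -∫ p, u p * pd v φ p := by
  have hdu := hu.pd v
  have hdφ : Continuous (pd v φ) :=
    ((hφ.fderiv_right (m := (⊤ : ℕ∞)) (by norm_cast)).clm_apply contDiff_const).continuous
  have h_int : ∀ {w ψ : ℝ × ℝ → ℝ}, Adm Ω w → Continuous ψ → Integrable fun p => w p * ψ p := by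
    intro w ψ hw hψ
    exact (hw.1.continuous.mul hψ).integrable_of_hasCompactSupport hw.2.1.mul_right
  have := integral_mul_fderiv_eq_neg_fderiv_mul_of_integrable (μ := volume) (f := u) (g := φ)
    (v := v) (h_int hdu hφ.continuous) (h_int hu hdφ) (h_int hu hφ.continuous)
    (fun x _ => (hu.1.differentiable (by simp)).differentiableAt)
    (fun x _ => (hφ.differentiable (by simp)).differentiableAt)
  simp only [pd]
  rw [this, neg_neg]

lemma integral_pd_pd_mul {Ω : Set (ℝ × ℝ)} {u φ : ℝ × ℝ → ℝ} (hu : Adm Ω u)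
    (hφ : ContDiff ℝ (⊤ : ℕ∞) φ) (v : ℝ × ℝ) :
    ∫ p, pd v (pd v u) p * φ p = ∫ p, u p * pd v (pd v φ) p := by
  have hdφ : ContDiff ℝ (⊤ : ℕ∞) (pd v φ) :=
    (hφ.fderiv_right (m := (⊤ : ℕ∞)) (by norm_cast)).clm_apply contDiff_const
  rw [integral_pd_mul (hu.pd v) hφ, integral_pd_mul hu hdφ, neg_neg]

lemma pd_eq_deriv {φ : ℝ × ℝ → ℝ} (hφ : Differentiable ℝ φ) (v p : ℝ × ℝ) :
    pd v φ p = deriv (fun t : ℝ => φ (p + t • v)) 0 := by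
  have h1 : HasDerivAt (fun t : ℝ => p + t • v) v 0 := by
    simpa using ((hasDerivAt_id (0 : ℝ)).smul_const v).const_add p
  have h2 : HasFDerivAt φ (fderiv ℝ φ p) (p + (0 : ℝ) • v) := by
    simpa using (hφ p).hasFDerivAt
  exact (h2.comp_hasDerivAt (0 : ℝ) h1).deriv.symm

lemma pd_pd_fst_sin_mul (α β : ℝ) (p : ℝ × ℝ) :
    pd (1, 0) (pd (1, 0) (fun p => sin (α * p.1) * sin (β * p.2))) p =
      -α ^ 2 * (sin (α * p.1) * sin (β * p.2)) := by
  have h1 : pd (1, 0) (fun p => sin (α * p.1) * sin (β * p.2)) =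
      fun p => α * cos (α * p.1) * sin (β * p.2) := by
    ext p
    rw [pd_eq_deriv (by fun_prop)]
    have : HasDerivAt (fun t : ℝ => sin (α * (p.1 + t)) * sin (β * p.2))
        (cos (α * (p.1 + 0)) * (α * 1) * sin (β * p.2)) 0 :=
      ((((hasDerivAt_id (0 : ℝ)).const_add p.1).const_mul α).sin).mul_const _
    simp only [Prod.fst_add, Prod.snd_add, Prod.smul_fst, Prod.smul_snd, smul_eq_mul, mul_one,
      mul_zero, add_zero]
    rw [this.deriv, add_zero]; ring
  rw [h1, pd_eq_deriv (by fun_prop)]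
  have : HasDerivAt (fun t : ℝ => α * cos (α * (p.1 + t)) * sin (β * p.2))
      (α * (-sin (α * (p.1 + 0)) * (α * 1)) * sin (β * p.2)) 0 :=
    (((((hasDerivAt_id (0 : ℝ)).const_add p.1).const_mul α).cos).const_mul α).mul_const _
  simp only [Prod.fst_add, Prod.snd_add, Prod.smul_fst, Prod.smul_snd, smul_eq_mul, mul_one,
    mul_zero, add_zero]
  rw [this.deriv]; simp; ring

lemma pd_pd_snd_sin_mul (α β : ℝ) (p : ℝ × ℝ) :
    pd (0, 1) (pd (0, 1) (fun p => sin (α * p.1) * sin (β * p.2))) p =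
      -β ^ 2 * (sin (α * p.1) * sin (β * p.2)) := by
  have h1 : pd (0, 1) (fun p => sin (α * p.1) * sin (β * p.2)) =
      fun p => sin (α * p.1) * (β * cos (β * p.2)) := by
    ext p
    rw [pd_eq_deriv (by fun_prop)]
    have : HasDerivAt (fun t : ℝ => sin (α * p.1) * sin (β * (p.2 + t)))
        (sin (α * p.1) * (cos (β * (p.2 + 0)) * (β * 1))) 0 :=
      ((((hasDerivAt_id (0 : ℝ)).const_add p.2).const_mul β).sin).const_mul _
    simp only [Prod.fst_add, Prod.snd_add, Prod.smul_fst, Prod.smul_snd, smul_eq_mul, mul_one,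
      mul_zero, add_zero]
    rw [this.deriv, add_zero]; ring
  rw [h1, pd_eq_deriv (by fun_prop)]
  have : HasDerivAt (fun t : ℝ => sin (α * p.1) * (β * cos (β * (p.2 + t))))
      (sin (α * p.1) * (β * (-sin (β * (p.2 + 0)) * (β * 1)))) 0 :=
    (((((hasDerivAt_id (0 : ℝ)).const_add p.2).const_mul β).cos).const_mul β).const_mul _
  simp only [Prod.fst_add, Prod.snd_add, Prod.smul_fst, Prod.smul_snd, smul_eq_mul, mul_one,
    mul_zero, add_zero]
  rw [this.deriv]; simp; ring

lemma sineCoeff_lap {Ω : Set (ℝ × ℝ)} {u : ℝ × ℝ → ℝ} (hu : Adm Ω u) (L H : ℝ) (m n : ℕ) :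
    sineCoeff L H (lap u) m n = -((m * π / L) ^ 2 + (n * π / H) ^ 2) * sineCoeff L H u m n := by
  set φ : ℝ × ℝ → ℝ := fun p => sin (m * π / L * p.1) * sin (n * π / H * p.2) with hφ
  have hφs : ContDiff ℝ (⊤ : ℕ∞) φ := by fun_prop
  have h_int : ∀ v, Integrable fun p => pd v (pd v u) p * φ p := fun v =>
    (((hu.pd v).pd v).1.continuous.mul
      hφs.continuous).integrable_of_hasCompactSupport
        ((hu.pd v).pd v).2.1.mul_right
  have h1 : sineCoeff L H (lap u) m n =
      ∫ p, (pd (1, 0) (pd (1, 0) u) p * φ p + pd (0, 1) (pd (0, 1) u) p * φ p) := by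
    simp only [sineCoeff, lap, uxx, uyy, hφ, add_mul]
  rw [h1, integral_add (h_int _) (h_int _), integral_pd_pd_mul hu hφs, integral_pd_pd_mul hu hφs,
    hφ]
  simp_rw [pd_pd_fst_sin_mul, pd_pd_snd_sin_mul]
  rw [sineCoeff, ← integral_const_mul, ← integral_add]
  · congr 1; ext p; ring
  · refine Continuous.integrable_of_hasCompactSupport ?_ hu.2.1.mul_right
    have := hu.1.continuous
    fun_prop
  · refine Continuous.integrable_of_hasCompactSupport ?_ hu.2.1.mul_right
    have := hu.1.continuous
    fun_prop

lemma Adm.sum {Ω : Set (ℝ × ℝ)} {k : ℕ} {u : Fin k → ℝ × ℝ → ℝ} (hu : ∀ i, Adm Ω (u i))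
    (c : Fin k → ℝ) : Adm Ω (fun q => ∑ i, c i * u i q) := by
  have hK : IsCompact (⋃ i, tsupport (u i)) := isCompact_iUnion fun i => (hu i).2.1
  have hs : Function.support (fun q => ∑ i, c i * u i q) ⊆ ⋃ i, tsupport (u i) := by
    intro q hq
    obtain ⟨i, -, hi⟩ := Finset.exists_ne_zero_of_sum_ne_zero hq
    exact Set.mem_iUnion.2 ⟨i, subset_tsupport _ (right_ne_zero_of_mul hi)⟩
  refine ⟨ContDiff.sum fun i _ => contDiff_const.mul (hu i).1,
    HasCompactSupport.of_support_subset_isCompact hK hs, ?_⟩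
  exact (closure_minimal hs hK.isClosed).trans (Set.iUnion_subset fun i => (hu i).2.2)

lemma pd_sum {Ω : Set (ℝ × ℝ)} {k : ℕ} {u : Fin k → ℝ × ℝ → ℝ} (hu : ∀ i, Adm Ω (u i))
    (c : Fin k → ℝ) (v : ℝ × ℝ) :
    pd v (fun q => ∑ i, c i * u i q) = fun q => ∑ i, c i * pd v (u i) q := by
  have hd : ∀ i q, DifferentiableAt ℝ (u i) q := fun i =>
    (hu i).1.differentiable (by simp)
  ext q
  simp only [pd]
  rw [fderiv_fun_sum fun i _ => (hd i q).const_mul (c i)]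
  simp [fderiv_const_mul (hd _ q)]

lemma lap_sum {Ω : Set (ℝ × ℝ)} {k : ℕ} {u : Fin k → ℝ × ℝ → ℝ} (hu : ∀ i, Adm Ω (u i))
    (c : Fin k → ℝ) (q : ℝ × ℝ) :
    lap (fun q => ∑ i, c i * u i q) q = ∑ i, c i * lap (u i) q := by
  simp only [lap, uxx, uyy]
  rw [pd_sum hu, pd_sum hu, pd_sum fun i => (hu i).pd _, pd_sum fun i => (hu i).pd _]
  simp [mul_add, Finset.sum_add_distrib]

lemma Adm.lap {Ω : Set (ℝ × ℝ)} {u : ℝ × ℝ → ℝ} (hu : Adm Ω u) : Adm Ω (lap u) := by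
  have := Adm.sum (u := ![_root_.pd (1, 0) (_root_.pd (1, 0) u),
    _root_.pd (0, 1) (_root_.pd (0, 1) u)])
    (Ω := Ω) (by
      intro i
      fin_cases i
      · exact (hu.pd _).pd _
      · exact (hu.pd _).pd _) ![1, 1]
  simpa [Fin.sum_univ_two, _root_.lap, uxx, uyy] using! this

lemma Adm.integral_sq_pos {Ω : Set (ℝ × ℝ)} {u : ℝ × ℝ → ℝ} (hu : Adm Ω u) (h0 : u ≠ 0) :
    0 < ∫ p, u p ^ 2 := by
  obtain ⟨p, hp⟩ := Function.ne_iff.1 h0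
  have hc := hu.1.continuous
  exact Continuous.integral_pos_of_hasCompactSupport_nonneg_nonzero (x := p) (by fun_prop)
    (hu.2.1.comp_left (g := fun y : ℝ => y ^ 2) (by simp)) (fun _ => sq_nonneg _)
    (pow_ne_zero 2 hp)

lemma sum_mul_ne_zero {k : ℕ} {u : Fin k → ℝ × ℝ → ℝ} (hli : LinearIndependent ℝ u)
    {c : Fin k → ℝ} (hc : c ≠ 0) : (fun q => ∑ i, c i * u i q) ≠ 0 := by
  intro h
  apply hc
  have : ∑ i, c i • u i = 0 := by
    rw [← h]; ext q; simp
  ext i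
  exact Fintype.linearIndependent_iff.1 hli c this i

lemma sineCoeff_sum {Ω : Set (ℝ × ℝ)} {k : ℕ} {u : Fin k → ℝ × ℝ → ℝ} (hu : ∀ i, Adm Ω (u i))
    (c : Fin k → ℝ) (L H : ℝ) (m n : ℕ) :
    sineCoeff L H (fun q => ∑ i, c i * u i q) m n = ∑ i, c i * sineCoeff L H (u i) m n := by
  simp only [sineCoeff, Finset.sum_mul]
  rw [integral_finsetSum]
  · simp [mul_assoc, integral_const_mul]
  · intro i _
    have := (hu i).1.continuous
    exact Continuous.integrable_of_hasCompactSupport (by fun_prop) (hu i).2.1.mul_left.mul_right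

/-- A function whose sine coefficients vanish at every frequency of bi-Laplacian eigenvalue at
most `ρ` and whose Rayleigh quotient is at most `ρ` vanishes identically. -/
lemma eq_zero_of_sineCoeff_eq_zero {L H ρ : ℝ} (hL : 0 < L) (hH : 0 < H) {w : ℝ × ℝ → ℝ}
    (hw : Adm (Set.Ioo 0 L ×ˢ Set.Ioo 0 H) w)
    (hρ : ∫ p, lap w p ^ 2 ≤ ρ * ∫ p, w p ^ 2)
    (h0 : ∀ m n : ℕ, ((m * π / L) ^ 2 + (n * π / H) ^ 2) ^ 2 ≤ ρ → sineCoeff L H w m n = 0) :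
    w = 0 := by
  by_contra hne
  obtain ⟨G, hG, hG'⟩ := parseval_sine hL hH hw.1.continuous
    ((subset_tsupport _).trans hw.2.2)
  obtain ⟨K, hK, hK'⟩ := parseval_sine hL hH hw.lap.1.continuous
    ((subset_tsupport _).trans hw.lap.2.2)
  simp_rw [sineCoeff_lap hw] at hK
  set μ : ℕ → ℕ → ℝ := fun m n => (m * π / L) ^ 2 + (n * π / H) ^ 2 with hμ
  have hD : ∀ m, HasSum (fun n => 2 / H * ((μ m n ^ 2 - ρ) * sineCoeff L H w m n ^ 2))
      (K m - ρ * G m) := by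
    intro m
    have := (hK m).sub ((hG m).mul_left ρ)
    rwa [show (fun n => 2 / H * (-μ m n * sineCoeff L H w m n) ^ 2 -
      ρ * (2 / H * sineCoeff L H w m n ^ 2)) =
      fun n => 2 / H * ((μ m n ^ 2 - ρ) * sineCoeff L H w m n ^ 2) by funext n; ring] at this
  have hD' : HasSum (fun m => 2 / L * (K m - ρ * G m))
      ((∫ p, lap w p ^ 2) - ρ * ∫ p, w p ^ 2) := by
    have := hK'.sub (hG'.mul_left ρ)
    rwa [show (fun m => 2 / L * K m - ρ * (2 / L * G m)) = fun m => 2 / L * (K m - ρ * G m) by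
      funext m; ring] at this
  have hnn : ∀ m n, 0 ≤ 2 / H * ((μ m n ^ 2 - ρ) * sineCoeff L H w m n ^ 2) := by
    intro m n
    rcases le_or_gt (μ m n ^ 2) ρ with h | h
    · rw [h0 m n h]; simp
    · have := sub_pos.2 h
      positivity
  have hnn' : ∀ m, 0 ≤ K m - ρ * G m := fun m => (hD m).nonneg (hnn m)
  have hz : (∫ p, lap w p ^ 2) - ρ * ∫ p, w p ^ 2 = 0 :=
    le_antisymm (by linarith) (hD'.nonneg fun m => mul_nonneg (by positivity) (hnn' m))
  rw [hz, hasSum_zero_iff_of_nonneg fun m => mul_nonneg (by positivity) (hnn' m)] at hD'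
  have hcoef : ∀ m n, sineCoeff L H w m n = 0 := by
    intro m n
    by_contra hc
    have h1 : K m - ρ * G m = 0 := by
      have := congrFun hD' m
      simpa [hL.ne'] using this
    have h2 := hD m
    rw [h1, hasSum_zero_iff_of_nonneg (hnn m)] at h2
    have h3 := congrFun h2 n
    have h4 : ¬ μ m n ^ 2 ≤ ρ := fun h => hc (h0 m n h)
    have h5 : μ m n ^ 2 - ρ ≠ 0 := by
      intro h; exact h4 (by linarith)
    simp [hc, h5, hH.ne'] at h3
  have hGz : ∀ m, G m = 0 := fun m => by
    have := hG m
    simp only [hcoef] at this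
    simp only [ne_eq, OfNat.ofNat_ne_zero, not_false_eq_true, zero_pow, mul_zero] at this
    exact this.unique hasSum_zero
  have hfin : ∫ p, w p ^ 2 = 0 := by
    simp only [hGz, mul_zero] at hG'
    exact hG'.unique hasSum_zero
  exact (hw.integral_sq_pos hne).ne' hfin

lemma le_card_latticePts {a ρ : ℝ} (ha : 0 < a) (hρ0 : 0 ≤ ρ) {k : ℕ} {u : Fin k → ℝ × ℝ → ℝ}
    (hu : ∀ i, Adm (Rect a) (u i)) (hli : LinearIndependent ℝ u)
    (hρ : ∀ c : Fin k → ℝ, c ≠ 0 → ∫ p, lap (fun q => ∑ i, c i * u i q) p ^ 2 ≤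
      ρ * ∫ p, (∑ i, c i * u i p) ^ 2) :
    k ≤ (latticePts a (ρ ^ (1 / 4 : ℝ) / π)).card := by
  by_contra! hlt
  set R := ρ ^ (1 / 4 : ℝ) / π with hR
  have hR0 : 0 ≤ R := by positivity
  let T : (Fin k → ℝ) →ₗ[ℝ] (latticePts a R → ℝ) :=
    Matrix.toLin' (Matrix.of fun (z : latticePts a R) i =>
      sineCoeff a (1 / a) (u i) z.1.1 z.1.2)
  obtain ⟨c, hcT, hc⟩ := (Submodule.ne_bot_iff _).1
    (LinearMap.ker_ne_bot_of_finrank_lt (f := T) (by simpa using hlt))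
  have hw := Adm.sum hu c
  refine sum_mul_ne_zero hli hc
    (eq_zero_of_sineCoeff_eq_zero ha (by positivity) hw (hρ c hc) ?_)
  intro m n hmn
  rcases Nat.eq_zero_or_pos m with rfl | hm
  · simp [sineCoeff]
  rcases Nat.eq_zero_or_pos n with rfl | hn
  · simp [sineCoeff]
  have hR4 : (π * R) ^ 4 = ρ := by
    rw [hR, mul_div_cancel₀ _ pi_ne_zero, ← Real.rpow_natCast, ← Real.rpow_mul hρ0]
    norm_num
  have hmem : (m, n) ∈ latticePts a R := by
    refine mem_latticePts ha hR0 hm hn ?_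
    have h1 : (((m : ℝ) * π / a) ^ 2 + (n * π / (1 / a)) ^ 2) ≤ (π * R) ^ 2 := by
      refine (pow_le_pow_iff_left₀ (by positivity) (by positivity) two_ne_zero).1 ?_
      calc _ ≤ ρ := hmn
        _ = _ := by rw [← hR4]; ring
    have h2 : (((m : ℝ) * π / a) ^ 2 + (n * π / (1 / a)) ^ 2) =
        π ^ 2 * ((m / a) ^ 2 + (n * a) ^ 2) := by
      field_simp
    rw [h2, mul_pow π R] at h1
    exact le_of_mul_le_mul_left h1 (by positivity)
  have h3 := congrFun (LinearMap.mem_ker.1 hcT) ⟨(m, n), hmem⟩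
  rw [sineCoeff_sum hu]
  simpa [T, Matrix.mulVec, dotProduct, mul_comm] using h3

lemma continuous_integral_sum_sq {Ω : Set (ℝ × ℝ)} {k : ℕ} {g : Fin k → ℝ × ℝ → ℝ}
    (hg : ∀ i, Adm Ω (g i)) :
    Continuous fun c : Fin k → ℝ => ∫ p, (∑ i, c i * g i p) ^ 2 := by
  have h_int : ∀ (c : Fin k → ℝ) i j, Integrable fun p => c i * g i p * (c j * g j p) := by
    intro c i j
    have := (hg i).1.continuous
    have := (hg j).1.continuous
    exact Continuous.integrable_of_hasCompactSupport (by fun_prop) (hg i).2.1.mul_left.mul_right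
  have h : (fun c : Fin k → ℝ => ∫ p, (∑ i, c i * g i p) ^ 2) =
      fun c => ∑ i, ∑ j, c i * c j * ∫ p, g i p * g j p := by
    funext c
    simp_rw [sq, Finset.sum_mul_sum]
    rw [integral_finsetSum _ fun i _ => integrable_finsetSum _ fun j _ => h_int c i j]
    refine Finset.sum_congr rfl fun i _ => ?_
    rw [integral_finsetSum _ fun j _ => h_int c i j]
    refine Finset.sum_congr rfl fun j _ => ?_
    rw [← integral_const_mul]
    congr 1; ext p; ring
  rw [h]
  fun_prop

/-- The Rayleigh quotients over the span of finitely many linearly independent test functions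
form a bounded set. -/
lemma bddAbove_rayleigh {Ω : Set (ℝ × ℝ)} {k : ℕ} {u : Fin k → ℝ × ℝ → ℝ}
    (hu : ∀ i, Adm Ω (u i)) (hli : LinearIndependent ℝ u) :
    BddAbove { r | ∃ c : Fin k → ℝ, c ≠ 0 ∧
      r = (∫ p, (lap (fun q => ∑ i, c i * u i q) p) ^ 2) / (∫ p, (∑ i, c i * u i p) ^ 2) } := by
  simp_rw [lap_sum hu]
  have hN := continuous_integral_sum_sq fun i => (hu i).lap
  have hD := continuous_integral_sum_sq hu
  have hpos : ∀ c : Fin k → ℝ, c ≠ 0 → ∫ p, (∑ i, c i * u i p) ^ 2 ≠ 0 := fun c hc =>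
    ((Adm.sum hu c).integral_sq_pos (sum_mul_ne_zero hli hc)).ne'
  obtain ⟨M, hM⟩ := (isCompact_sphere (0 : Fin k → ℝ) 1).exists_bound_of_continuousOn
    (f := fun c => (∫ p, (∑ i, c i * lap (u i) p) ^ 2) / (∫ p, (∑ i, c i * u i p) ^ 2))
    (hN.continuousOn.div hD.continuousOn fun c hc => hpos c (ne_zero_of_mem_unit_sphere ⟨c, hc⟩))
  refine ⟨M, ?_⟩
  rintro r ⟨c, hc, rfl⟩
  have hc' : ‖c‖ ≠ 0 := norm_ne_zero_iff.2 hc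
  have hscale : ∀ g : Fin k → ℝ × ℝ → ℝ, ∫ p, (∑ i, (‖c‖⁻¹ • c) i * g i p) ^ 2 =
      ‖c‖⁻¹ ^ 2 * ∫ p, (∑ i, c i * g i p) ^ 2 := by
    intro g
    rw [← integral_const_mul]
    congr 1; ext p
    simp only [Pi.smul_apply, smul_eq_mul, mul_assoc]
    rw [← Finset.mul_sum, mul_pow]
  have h := hM (‖c‖⁻¹ • c) (by simp [norm_smul, hc'])
  rw [hscale, hscale, mul_div_mul_left _ _ (by positivity)] at h
  exact (le_abs_self _).trans h

/-- Test functions dual to finitely many distinct points of an open set. -/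
lemma exists_adm_linearIndependent {Ω : Set (ℝ × ℝ)} (hΩ : IsOpen Ω) {k : ℕ}
    {x : Fin k → ℝ × ℝ} (hx : Function.Injective x) (hxΩ : ∀ i, x i ∈ Ω) :
    ∃ u : Fin k → ℝ × ℝ → ℝ, (∀ i, Adm Ω (u i)) ∧ LinearIndependent ℝ u := by
  have h : ∀ i, ∃ f : ℝ × ℝ → ℝ, tsupport f ⊆ Ω \ (x '' {i}ᶜ) ∧ HasCompactSupport f ∧
      ContDiff ℝ (⊤ : ℕ∞) f ∧ Set.range f ⊆ Set.Icc 0 1 ∧ f (x i) = 1 := by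
    intro i
    apply exists_contDiff_tsupport_subset
    refine (hΩ.sdiff ((Set.toFinite _).image x).isClosed).mem_nhds ⟨hxΩ i, ?_⟩
    rintro ⟨j, hj, hji⟩
    exact hj (hx hji)
  choose u hu1 hu2 hu3 _ hu5 using h
  refine ⟨u, fun i => ⟨hu3 i, hu2 i, (hu1 i).trans Set.sdiff_subset⟩, ?_⟩
  rw [Fintype.linearIndependent_iff]
  intro c hc j
  have h1 := congrFun hc (x j)
  rw [Finset.sum_apply, Finset.sum_eq_single j] at h1
  · simpa [hu5] using h1
  · intro i _ hij
    have : u i (x j) = 0 := by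
      by_contra h
      exact (hu1 i (subset_tsupport _ h)).2 ⟨j, fun h => hij h.symm, rfl⟩
    simp [this]
  · simp

lemma exists_adm_rect_linearIndependent {a : ℝ} (ha : 0 < a) (k : ℕ) :
    ∃ u : Fin k → ℝ × ℝ → ℝ, (∀ i, Adm (Rect a) (u i)) ∧ LinearIndependent ℝ u := by
  have hk : (0 : ℝ) < k + 1 := by positivity
  refine exists_adm_linearIndependent (isOpen_Ioo.prod isOpen_Ioo)
    (x := fun i : Fin k => (a * ((i + 1) / (k + 1)), 1 / a * (1 / 2))) ?_ ?_
  · intro i j hij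
    have h1 := congrArg Prod.fst hij
    have h2 := mul_left_cancel₀ ha.ne' h1
    rw [div_left_inj' hk.ne'] at h2
    exact Fin.ext (by exact_mod_cast add_right_cancel h2)
  · intro i
    have hi : (i : ℝ) < k := by exact_mod_cast i.2
    refine ⟨⟨by positivity, ?_⟩, by positivity, ?_⟩
    · exact mul_lt_of_lt_one_right ha ((div_lt_one hk).2 (by linarith))
    · exact mul_lt_of_lt_one_right (by positivity) (by norm_num)

lemma one_le_of_latticePts_nonempty {a R : ℝ} (ha : 1 ≤ a) (hR : 0 ≤ R)
    (h : (latticePts a R).Nonempty) : 1 ≤ R := by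
  obtain ⟨z, hz⟩ := h
  rw [latticePts, Finset.mem_map] at hz
  obtain ⟨⟨m, n⟩, hmn, -⟩ := hz
  simp only [Finset.mem_sigma, Finset.mem_Icc] at hmn
  obtain ⟨-, hn1, hn2⟩ := hmn
  have ha0 : 0 < a := by linarith
  have h1 := (Nat.one_le_floor_iff _).1 (hn1.trans hn2)
  rw [le_div_iff₀ (by positivity), one_mul] at h1
  have h2 := (Real.le_sqrt' (by positivity)).1 h1
  have h3 : a ^ 2 * 1 ≤ a ^ 2 * R ^ 2 := by nlinarith [sq_nonneg (m : ℝ), one_le_pow₀ (n := 2) ha]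
  have h4 := le_of_mul_le_mul_left h3 (by positivity)
  nlinarith

lemma refined_lower_bound_of_le_card {A a ρ : ℝ} (ha : 1 ≤ a) (haA : a ≤ A) (hρ : 0 ≤ ρ) {k : ℕ}
    (hk : 1 ≤ k) (h : k ≤ (latticePts a (ρ ^ (1 / 4 : ℝ) / π)).card) :
    4 * π * k + 2 * (a + 1 / a) * ρ ^ (1 / 4 : ℝ)
      - 4 * π * ((25 * A ^ 2 + 19) * A) * ρ ^ ((11 / 12 : ℝ) / 4) ≤ ρ ^ (1 / 2 : ℝ) := by
  set t := ρ ^ (1 / 4 : ℝ) with ht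
  have ht0 : 0 ≤ t := by positivity
  have hR := one_le_of_latticePts_nonempty ha (by positivity)
    (Finset.card_pos.1 (hk.trans h))
  have h1 := card_latticePts_le ha haA hR
  have h2 : (k : ℝ) ≤ (latticePts a (t / π)).card := by exact_mod_cast h
  have e1 : ρ ^ (1 / 2 : ℝ) = t ^ 2 := by
    rw [ht, ← Real.rpow_natCast, ← Real.rpow_mul hρ]; norm_num
  have e2 : ρ ^ ((11 / 12 : ℝ) / 4) = t ^ (11 / 12 : ℝ) := by
    rw [ht, ← Real.rpow_mul hρ]; norm_num
  have h3 : (t / π) ^ (11 / 12 : ℝ) ≤ t ^ (11 / 12 : ℝ) :=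
    Real.rpow_le_rpow (by positivity) (div_le_self ht0 (by linarith [pi_gt_three])) (by norm_num)
  rw [e1, e2]
  have hA : 0 ≤ (25 * A ^ 2 + 19) * A := by
    have : 0 ≤ A := by linarith
    positivity
  have h4 := mul_le_mul_of_nonneg_left h3 hA
  have h5 : (k : ℝ) ≤ π * (t / π) ^ 2 / 4 - (a + 1 / a) * (t / π) / 2
      + (25 * A ^ 2 + 19) * A * t ^ (11 / 12 : ℝ) := by linarith
  have h6 := mul_le_mul_of_nonneg_left h5 (by positivity : 0 ≤ 4 * π)
  have h7 : 4 * π * (π * (t / π) ^ 2 / 4 - (a + 1 / a) * (t / π) / 2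
      + (25 * A ^ 2 + 19) * A * t ^ (11 / 12 : ℝ)) =
      t ^ 2 - 2 * (a + 1 / a) * t + 4 * π * ((25 * A ^ 2 + 19) * A) * t ^ (11 / 12 : ℝ) := by
    generalize t ^ (11 / 12 : ℝ) = s
    generalize 1 / a = b
    field_simp
    ring
  linarith

/-- Uniform refined lower bound on bounded ranges of `a`: for every `A ≥ 1`
there are `C > 0` and `θ ∈ (0,1)` such that for all `a ∈ [1,A]` and `k ≥ 1`,
`λ_k(a)^{1/2} ≥ 4πk + 2(a + 1/a)λ_k(a)^{1/4} − Cλ_k(a)^{θ/4} − 3π`. -/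
theorem uniform_refined_lower_bound (A : ℝ) (hA : 1 ≤ A) :
    ∃ C : ℝ, 0 < C ∧ ∃ θ ∈ Set.Ioo (0 : ℝ) 1,
      ∀ a ∈ Set.Icc (1 : ℝ) A, ∀ k : ℕ, 1 ≤ k →
        (lamk k a) ^ ((1 : ℝ) / 2) ≥
          4 * π * k + 2 * (a + 1 / a) * (lamk k a) ^ ((1 : ℝ) / 4)
            - C * (lamk k a) ^ (θ / 4) - 3 * π := by
  refine ⟨4 * π * ((25 * A ^ 2 + 19) * A), by positivity, 11 / 12, by norm_num, ?_⟩
  rintro a ⟨ha, haA⟩ k hk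
  have ha0 : 0 < a := by linarith
  have hclosed : IsClosed {ρ : ℝ | 4 * π * k + 2 * (a + 1 / a) * ρ ^ (1 / 4 : ℝ)
      - 4 * π * ((25 * A ^ 2 + 19) * A) * ρ ^ ((11 / 12 : ℝ) / 4) ≤ ρ ^ (1 / 2 : ℝ)} := by
    have hc : ∀ s : ℝ, 0 ≤ s → Continuous fun ρ : ℝ => ρ ^ s := fun s hs =>
      Real.continuous_rpow_const hs
    exact isClosed_le ((continuous_const.add ((hc _ (by norm_num)).const_mul _)).sub
      ((hc _ (by norm_num)).const_mul _)) (hc _ (by norm_num))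
  have hnonneg : ∀ u : Fin k → ℝ × ℝ → ℝ, 0 ≤ sSup { r | ∃ c : Fin k → ℝ, c ≠ 0 ∧
      r = (∫ p, (lap (fun q => ∑ i, c i * u i q) p) ^ 2) / (∫ p, (∑ i, c i * u i p) ^ 2) } := by
    intro u
    apply Real.sSup_nonneg
    rintro r ⟨c, -, rfl⟩
    exact div_nonneg (integral_nonneg fun _ => sq_nonneg _) (integral_nonneg fun _ => sq_nonneg _)
  obtain ⟨u₀, hu₀⟩ := exists_adm_rect_linearIndependent ha0 k
  have hmem : lamk k a ∈ _ := closure_minimal ?_ hclosed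
    (csInf_mem_closure ⟨_, u₀, hu₀.1, hu₀.2, rfl⟩ ⟨0, ?_⟩)
  · have := Set.mem_ofPred_eq ▸ hmem
    linarith [pi_pos]
  · rintro ρ ⟨u, hu, hli, rfl⟩
    refine refined_lower_bound_of_le_card ha haA (hnonneg u) hk
      (le_card_latticePts ha0 (hnonneg u) hu hli fun c hc => ?_)
    rw [← div_le_iff₀ ((Adm.sum hu c).integral_sq_pos (sum_mul_ne_zero hli hc))]
    exact le_csSup (bddAbove_rayleigh hu hli) ⟨c, hc, rfl⟩
  · rintro ρ ⟨u, -, -, rfl⟩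
    exact hnonneg u
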